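/- arXiv:0901.2912 — 2 statements merged into one kernel-verified Lean document; each statement's English description precedes it below -/
import Mathlib

section
/- Let A be an m×n real matrix, let w ∈ ℝ^n have strictly positive entries, and let K ⊆ {1,…,n}. Suppose that every vector z in the null space of A satisfies Σ_{i∈K} w_i|z_i| ≤ Σ_{i∉K} w_i|z_i|. Then every vector x ∈ ℝ^n whose support is contained in K is a minimizer of the weighted ℓ1 norm ‖·‖_{w,1} over the affine set {x' : A x' = A x}; that is, ‖x‖_{w,1} ≤ ‖x'‖_{w,1} for every x' with A x' = A x. -/
section WeightedNormSums

variable {ι : Type*} {E : ι → Type*} [∀ i, SeminormedAddCommGroup (E i)] {w : ι → ℝ}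

theorem sum_mul_norm_le_sum_mul_norm_add_sum_mul_norm_sub {s : Finset ι}
    (hw : ∀ i ∈ s, 0 ≤ w i) (x y : ∀ i, E i) :
    ∑ i ∈ s, w i * ‖x i‖ ≤ ∑ i ∈ s, w i * ‖y i‖ + ∑ i ∈ s, w i * ‖y i - x i‖ := by
  simp only [← Finset.sum_add_distrib, ← mul_add]
  exact Finset.sum_le_sum fun i hi ↦
    mul_le_mul_of_nonneg_left (norm_le_norm_add_norm_sub (y i) (x i)) (hw i hi)

variable [Fintype ι] [DecidableEq ι] {K : Finset ι}

theorem sum_mul_norm_le_of_sum_mul_norm_sub_le_compl (hw : ∀ i ∈ K, 0 ≤ w i) {x y : ∀ i, E i}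
    (hx : ∀ i ∉ K, x i = 0)
    (hxy : ∑ i ∈ K, w i * ‖y i - x i‖ ≤ ∑ i ∈ Kᶜ, w i * ‖y i - x i‖) :
    ∑ i, w i * ‖x i‖ ≤ ∑ i, w i * ‖y i‖ := by
  have sum_eq_sum_support : ∑ i, w i * ‖x i‖ = ∑ i ∈ K, w i * ‖x i‖ :=
    (Finset.sum_subset K.subset_univ fun i _ hi ↦ by rw [hx i hi, norm_zero, mul_zero]).symm
  have sum_compl_sub_eq : ∑ i ∈ Kᶜ, w i * ‖y i - x i‖ = ∑ i ∈ Kᶜ, w i * ‖y i‖ :=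
    Finset.sum_congr rfl fun i hi ↦ by rw [hx i (Finset.mem_compl.mp hi), sub_zero]
  calc ∑ i, w i * ‖x i‖
      = ∑ i ∈ K, w i * ‖x i‖ := sum_eq_sum_support
    _ ≤ ∑ i ∈ K, w i * ‖y i‖ + ∑ i ∈ K, w i * ‖y i - x i‖ :=
      sum_mul_norm_le_sum_mul_norm_add_sum_mul_norm_sub hw x y
    _ ≤ ∑ i ∈ K, w i * ‖y i‖ + ∑ i ∈ Kᶜ, w i * ‖y i - x i‖ := by gcongr
    _ = ∑ i ∈ K, w i * ‖y i‖ + ∑ i ∈ Kᶜ, w i * ‖y i‖ := by rw [sum_compl_sub_eq]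
    _ = ∑ i, w i * ‖y i‖ := Finset.sum_add_sum_compl K _

theorem weighted_l1_recovery_of_nullspace_condition_general {F : Type*} [AddGroup F]
    (f : (∀ i, E i) →+ F) (hw : ∀ i ∈ K, 0 ≤ w i)
    (hnull : ∀ z, f z = 0 → ∑ i ∈ K, w i * ‖z i‖ ≤ ∑ i ∈ Kᶜ, w i * ‖z i‖)
    {x y : ∀ i, E i} (hx : ∀ i, x i ≠ 0 → i ∈ K) (hxy : f y = f x) :
    ∑ i, w i * ‖x i‖ ≤ ∑ i, w i * ‖y i‖ :=
  sum_mul_norm_le_of_sum_mul_norm_sub_le_compl hw (fun i ↦ not_imp_comm.mp (hx i))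
    (hnull (y - x) (by rw [map_sub, hxy, sub_self]))

end WeightedNormSums

/-- If every vector `z` in the null space of `A` satisfies
`∑_{i∈K} w_i |z_i| ≤ ∑_{i∉K} w_i |z_i|`, then every vector `x` supported on `K`
is a minimizer of the weighted ℓ1 norm over `{x' : A x' = A x}`. -/
theorem weighted_l1_recovery_of_nullspace_condition
    (m n : ℕ) (A : Matrix (Fin m) (Fin n) ℝ) (w : Fin n → ℝ)
    (hw : ∀ i, 0 < w i) (K : Finset (Fin n))
    (hnull : ∀ z : Fin n → ℝ, A.mulVec z = 0 →
      ∑ i ∈ K, w i * |z i| ≤ ∑ i ∈ Kᶜ, w i * |z i|) :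
    ∀ x : Fin n → ℝ, (∀ i, x i ≠ 0 → i ∈ K) →
      ∀ x' : Fin n → ℝ, A.mulVec x' = A.mulVec x →
        ∑ i, w i * |x i| ≤ ∑ i, w i * |x' i| := by
  intro x hx x' hA
  exact weighted_l1_recovery_of_nullspace_condition_general
    A.mulVecLin.toAddMonoidHom (fun i _ ↦ (hw i).le) hnull hx hA
end

section
/- Define G(x) = (2/√π) ∫_0^x e^{−y²} dy and g(x) = (2/√π) e^{−x²}. Let C > 0, W > 0, and D₁, D₂ ≥ 0 with D₁ + D₂ > 0, and define F(x) = C x² − D₁ log G(x) − D₂ log G(Wx) for x > 0. Then F is strictly convex on (0,∞), F(x) → +∞ as x → 0⁺ and as x → ∞, and F attains its unique global minimum on (0,∞) at the unique point x₀ > 0 satisfying the stationarity equation 2C x₀ = D₁ g(x₀)/G(x₀) + D₂ W g(Wx₀)/G(Wx₀). -/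
open Filter Topology

/-- The error-function normalization `G(x) = (2/√π) ∫_0^x e^{−y²} dy`. -/
noncomputable def erfG (x : ℝ) : ℝ := (2 / Real.sqrt Real.pi) * ∫ y in (0:ℝ)..x, Real.exp (-y ^ 2)

/-- `g(x) = (2/√π) e^{−x²}`, the derivative of `erfG`. -/
noncomputable def erfg (x : ℝ) : ℝ := (2 / Real.sqrt Real.pi) * Real.exp (-x ^ 2)

/-!
`log G` is concave on `(0, ∞)`, because its derivative `g / G` is a positive decreasing function
divided by a positive increasing one. Hence `F` is the sum of the strictly convex `C x²` and of
convex functions. These are nonnegative since `G ≤ 1`, so `C x²` forces `F → ∞` at infinity, and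
`G(0⁺) = 0` forces it at the origin. A coercive continuous function attains its minimum, and for a
strictly convex function the stationary points are exactly the strict global minimizers.
-/

section Convexity

variable {𝕜 E β ι : Type*}

theorem concaveOn_sum [Semiring 𝕜] [PartialOrder 𝕜] [AddCommMonoid E] [SMul 𝕜 E]
    [AddCommMonoid β] [PartialOrder β] [IsOrderedAddMonoid β] [Module 𝕜 β] {s : Set E}
    {t : Finset ι} {f : ι → E → β} (hs : Convex 𝕜 s) (hf : ∀ i ∈ t, ConcaveOn 𝕜 s (f i)) :
    ConcaveOn 𝕜 s fun x => ∑ i ∈ t, f i x := by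
  simpa only [Finset.sum_fn] using
    Finset.sum_induction f (ConcaveOn 𝕜 s) (fun _ _ => ConcaveOn.add) (concaveOn_const 0 hs) hf

theorem strictConvexOn_const_smul [CommSemiring 𝕜] [PartialOrder 𝕜] [AddCommMonoid E] [SMul 𝕜 E]
    [AddCommMonoid β] [PartialOrder β] [Module 𝕜 β] [PosSMulStrictMono 𝕜 β] {s : Set E}
    {f : E → β} {c : 𝕜} (hc : 0 < c) (hf : StrictConvexOn 𝕜 s f) :
    StrictConvexOn 𝕜 s fun x => c • f x :=
  ⟨hf.1, fun x hx y hy hxy a b ha hb hab =>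
    calc
      c • f (a • x + b • y) < c • (a • f x + b • f y) :=
        smul_lt_smul_of_pos_left (hf.2 hx hy hxy ha hb hab) hc
      _ = a • c • f x + b • c • f y := by rw [smul_add, smul_comm c, smul_comm c]⟩

end Convexity

section Minimizers

open Set

theorem exists_isMinOn_Ioi_of_tendsto_atTop {α β : Type*} [LinearOrder α] [TopologicalSpace α]
    [OrderTopology α] [CompactIccSpace α] [NoMaxOrder α] [LinearOrder β] [TopologicalSpace β]
    [ClosedIicTopology β] {f : α → β} {a : α} (hcont : ContinuousOn f (Ioi a))
    (hleft : Tendsto f (𝓝[>] a) atTop) (hright : Tendsto f atTop atTop) :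
    ∃ x₀ ∈ Ioi a, IsMinOn f (Ioi a) x₀ := by
  obtain ⟨b, hab⟩ := exists_gt a
  obtain ⟨l, hal, hl⟩ :=
    mem_nhdsGT_iff_exists_Ioo_subset.1 (hleft.eventually_ge_atTop (f b))
  have : Nonempty α := ⟨a⟩
  obtain ⟨r, hr⟩ := eventually_atTop.1 (hright.eventually_ge_atTop (f b))
  have hsub : Icc (min l b) (max r b) ⊆ Ioi a := fun x hx => (lt_min hal hab).trans_le hx.1
  have hb : b ∈ Icc (min l b) (max r b) := ⟨min_le_right _ _, le_max_right _ _⟩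
  obtain ⟨x₀, hx₀, hmin⟩ := isCompact_Icc.exists_isMinOn ⟨b, hb⟩ (hcont.mono hsub)
  refine ⟨x₀, hsub hx₀, fun x hx => ?_⟩
  rcases lt_or_ge x (min l b) with hxl | hxl
  · exact (hmin hb).trans (hl ⟨hx, hxl.trans_le (min_le_left _ _)⟩)
  rcases lt_or_ge (max r b) x with hxr | hxr
  · exact (hmin hb).trans (hr x ((le_max_left _ _).trans hxr.le))
  · exact hmin ⟨hxl, hxr⟩

theorem lt_of_strictConvexOn_of_hasDerivAt_zero {f : ℝ → ℝ} {s : Set ℝ} {x₀ x : ℝ}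
    (hf : StrictConvexOn ℝ s f) (hx₀ : x₀ ∈ s) (hderiv : HasDerivAt f 0 x₀) (hx : x ∈ s)
    (hne : x ≠ x₀) : f x₀ < f x := by
  rcases hne.lt_or_gt with hlt | hgt
  · exact (slope_neg_iff_of_le hlt.le).1 (hf.slope_lt_of_hasDerivAt hx hx₀ hlt hderiv)
  · exact (slope_pos_iff_of_le hgt.le).1 (hf.lt_slope_of_hasDerivAt hx₀ hx hgt hderiv)

theorem exists_forall_lt_and_deriv_eq_zero_iff_of_strictConvexOn_Ioi {f f' : ℝ → ℝ} {a : ℝ}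
    (hf : StrictConvexOn ℝ (Ioi a) f) (hderiv : ∀ x ∈ Ioi a, HasDerivAt f (f' x) x)
    (hleft : Tendsto f (𝓝[>] a) atTop) (hright : Tendsto f atTop atTop) :
    ∃ x₀ ∈ Ioi a, (∀ x ∈ Ioi a, f' x = 0 ↔ x = x₀) ∧ ∀ x ∈ Ioi a, x ≠ x₀ → f x₀ < f x := by
  have hcont : ContinuousOn f (Ioi a) := fun x hx => (hderiv x hx).continuousAt.continuousWithinAt
  obtain ⟨x₀, hx₀, hmin⟩ := exists_isMinOn_Ioi_of_tendsto_atTop hcont hleft hright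
  have hstat : f' x₀ = 0 :=
    (hmin.isLocalMin (Ioi_mem_nhds hx₀)).hasDerivAt_eq_zero (hderiv x₀ hx₀)
  have lt_of_stationary : ∀ y ∈ Ioi a, f' y = 0 → ∀ x ∈ Ioi a, x ≠ y → f y < f x :=
    fun y hy hy₀ x hx hne =>
      lt_of_strictConvexOn_of_hasDerivAt_zero hf hy (hy₀ ▸ hderiv y hy) hx hne
  refine ⟨x₀, hx₀, fun x hx => ⟨fun hx' => ?_, fun h => h ▸ hstat⟩, lt_of_stationary x₀ hx₀ hstat⟩
  by_contra hne
  exact (lt_of_stationary x hx hx' x₀ hx₀ (Ne.symm hne)).not_ge (hmin hx)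

end Minimizers

section ErrorFunction

theorem two_div_sqrt_pi_pos : 0 < 2 / √Real.pi := by
  have := Real.pi_pos
  positivity

theorem erfg_pos (x : ℝ) : 0 < erfg x := mul_pos two_div_sqrt_pi_pos (Real.exp_pos _)

theorem antitoneOn_erfg : AntitoneOn erfg (Set.Ici 0) := by
  intro x hx y _ hxy
  have hsq : x ^ 2 ≤ y ^ 2 := pow_le_pow_left₀ hx hxy 2
  exact mul_le_mul_of_nonneg_left (Real.exp_le_exp.2 (neg_le_neg hsq)) two_div_sqrt_pi_pos.le

theorem hasDerivAt_erfG (x : ℝ) : HasDerivAt erfG (erfg x) x := by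
  have hcont : Continuous fun y : ℝ => Real.exp (-y ^ 2) := by fun_prop
  exact (hcont.integral_hasStrictDerivAt 0 x).hasDerivAt.const_mul _

theorem continuous_erfG : Continuous erfG :=
  continuous_iff_continuousAt.2 fun x => (hasDerivAt_erfG x).continuousAt

theorem strictMono_erfG : StrictMono erfG := strictMono_of_hasDerivAt_pos hasDerivAt_erfG erfg_pos

theorem erfG_zero : erfG 0 = 0 := by simp [erfG]

theorem erfG_pos {x : ℝ} (hx : 0 < x) : 0 < erfG x := erfG_zero ▸ strictMono_erfG hx

theorem tendsto_erfG_atTop : Tendsto erfG atTop (𝓝 1) := by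
  have hint : MeasureTheory.Integrable fun y : ℝ => Real.exp (-y ^ 2) := by
    simpa using integrable_exp_neg_mul_sq one_pos
  have hval : ∫ y in Set.Ioi (0 : ℝ), Real.exp (-y ^ 2) = √Real.pi / 2 := by
    simpa using integral_gaussian_Ioi 1
  have hlim : Tendsto erfG atTop (𝓝 (2 / √Real.pi * (√Real.pi / 2))) :=
    hval ▸ (MeasureTheory.intervalIntegral_tendsto_integral_Ioi 0 hint.integrableOn
      tendsto_id).const_mul (2 / √Real.pi)
  have hpi : √Real.pi ≠ 0 := (Real.sqrt_pos.2 Real.pi_pos).ne'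
  rwa [show 2 / √Real.pi * (√Real.pi / 2) = 1 by field_simp] at hlim

theorem erfG_le_one (x : ℝ) : erfG x ≤ 1 :=
  strictMono_erfG.monotone.ge_of_tendsto tendsto_erfG_atTop x

theorem log_erfG_nonpos {x : ℝ} (hx : 0 < x) : Real.log (erfG x) ≤ 0 :=
  Real.log_nonpos (erfG_pos hx).le (erfG_le_one x)

theorem antitoneOn_erfg_div_erfG : AntitoneOn (fun x => erfg x / erfG x) (Set.Ioi 0) :=
  fun x hx _ hy hxy =>
    div_le_div₀ (erfg_pos x).le
      (antitoneOn_erfg (Set.Ioi_subset_Ici_self hx) (Set.Ioi_subset_Ici_self hy) hxy)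
      (erfG_pos hx) (strictMono_erfG.monotone hxy)

theorem hasDerivAt_log_erfG {x : ℝ} (hx : 0 < x) :
    HasDerivAt (fun y => Real.log (erfG y)) (erfg x / erfG x) x :=
  (hasDerivAt_erfG x).log (erfG_pos hx).ne'

theorem concaveOn_log_erfG : ConcaveOn ℝ (Set.Ioi 0) fun x => Real.log (erfG x) := by
  have hdiff : DifferentiableOn ℝ (fun x => Real.log (erfG x)) (Set.Ioi 0) := fun x hx =>
    (hasDerivAt_log_erfG hx).differentiableAt.differentiableWithinAt
  have hanti : AntitoneOn (deriv fun x => Real.log (erfG x)) (Set.Ioi 0) :=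
    antitoneOn_erfg_div_erfG.congr fun x hx => (hasDerivAt_log_erfG hx).deriv.symm
  refine AntitoneOn.concaveOn_of_deriv (convex_Ioi 0) hdiff.continuousOn ?_ ?_ <;>
    rwa [interior_Ioi]

theorem tendsto_log_erfG_nhdsGT_zero : Tendsto (fun x => Real.log (erfG x)) (𝓝[>] 0) atBot := by
  refine Real.tendsto_log_nhdsGT_zero.comp (tendsto_nhdsWithin_iff.2 ⟨?_, ?_⟩)
  · exact (erfG_zero ▸ continuous_erfG.tendsto 0).mono_left nhdsWithin_le_nhds
  · filter_upwards [self_mem_nhdsWithin] with x hx using erfG_pos hx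

variable {w : ℝ}

theorem concaveOn_log_erfG_const_mul (hw : 0 < w) :
    ConcaveOn ℝ (Set.Ioi 0) fun x => Real.log (erfG (w * x)) :=
  (concaveOn_log_erfG.comp_linearMap (LinearMap.mulLeft ℝ w)).subset
    (fun _ hx => mul_pos hw hx) (convex_Ioi 0)

theorem tendsto_log_erfG_const_mul_nhdsGT_zero (hw : 0 < w) :
    Tendsto (fun x => Real.log (erfG (w * x))) (𝓝[>] 0) atBot := by
  refine tendsto_log_erfG_nhdsGT_zero.comp (tendsto_nhdsWithin_iff.2 ⟨?_, ?_⟩)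
  · exact ((continuous_const_mul w).tendsto' 0 0 (mul_zero w)).mono_left nhdsWithin_le_nhds
  · filter_upwards [self_mem_nhdsWithin] with x hx using mul_pos hw hx

theorem hasDerivAt_log_erfG_const_mul {x : ℝ} (hwx : 0 < w * x) :
    HasDerivAt (fun y => Real.log (erfG (w * y))) (w * erfg (w * x) / erfG (w * x)) x := by
  have hmul : HasDerivAt (fun y => w * y) w x := by simpa using (hasDerivAt_id x).const_mul w
  exact ((hasDerivAt_log_erfG hwx).comp x hmul).congr_deriv (by ring)

end ErrorFunction

section ExternalAngle

variable {ι : Type*} [Fintype ι]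

/-- The function `x ↦ C x² − ∑ᵢ Dᵢ log G(Wᵢ x)`, whose minimum over `(0, ∞)` is the external angle
exponent. The paper's `F` has two terms, with weights `D₁, D₂` and scales `1, W`. -/
noncomputable def externalAngleFunction (C : ℝ) (D W : ι → ℝ) (x : ℝ) : ℝ :=
  C * x ^ 2 - ∑ i, D i * Real.log (erfG (W i * x))

namespace externalAngleFunction

variable {C : ℝ} {D W : ι → ℝ}

theorem hasDerivAt (hW : ∀ i, 0 < W i) {x : ℝ} (hx : 0 < x) :
    HasDerivAt (externalAngleFunction C D W)
      (2 * C * x - ∑ i, D i * W i * erfg (W i * x) / erfG (W i * x)) x := by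
  have hsq : HasDerivAt (fun y => C * y ^ 2) (2 * C * x) x :=
    ((hasDerivAt_pow 2 x).const_mul C).congr_deriv (by push_cast; ring)
  have hsum : HasDerivAt (fun y => ∑ i, D i * Real.log (erfG (W i * y)))
      (∑ i, D i * (W i * erfg (W i * x) / erfG (W i * x))) x :=
    HasDerivAt.fun_sum fun i _ =>
      (hasDerivAt_log_erfG_const_mul (mul_pos (hW i) hx)).const_mul (D i)
  exact (hsq.sub hsum).congr_deriv (by simp only [mul_div_assoc, mul_assoc])

theorem strictConvexOn (hC : 0 < C) (hD : ∀ i, 0 ≤ D i) (hW : ∀ i, 0 < W i) :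
    StrictConvexOn ℝ (Set.Ioi 0) (externalAngleFunction C D W) := by
  have hsq : StrictConvexOn ℝ (Set.Ioi 0) fun x : ℝ => C * x ^ 2 :=
    strictConvexOn_const_smul hC
      ((strictConvexOn_pow le_rfl).subset Set.Ioi_subset_Ici_self (convex_Ioi 0))
  have hsum : ConcaveOn ℝ (Set.Ioi 0) fun x => ∑ i, D i * Real.log (erfG (W i * x)) :=
    concaveOn_sum (convex_Ioi 0) fun i _ => (concaveOn_log_erfG_const_mul (hW i)).smul (hD i)
  exact hsq.sub_concaveOn hsum

theorem mul_sq_sub_sum_le (hD : ∀ i, 0 ≤ D i) (hW : ∀ i, 0 < W i) {x : ℝ} (hx : 0 < x)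
    (s : Finset ι) :
    C * x ^ 2 - ∑ i ∈ s, D i * Real.log (erfG (W i * x)) ≤ externalAngleFunction C D W x :=
  sub_le_sub_left (Finset.sum_le_sum_of_subset_of_nonpos' s.subset_univ fun i _ _ =>
    mul_nonpos_of_nonneg_of_nonpos (hD i) (log_erfG_nonpos (mul_pos (hW i) hx))) _

theorem tendsto_atTop (hC : 0 < C) (hD : ∀ i, 0 ≤ D i) (hW : ∀ i, 0 < W i) :
    Tendsto (externalAngleFunction C D W) atTop atTop := by
  refine tendsto_atTop_mono' _ ?_ ((tendsto_pow_atTop two_ne_zero).const_mul_atTop hC)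
  filter_upwards [eventually_gt_atTop 0] with x hx
  simpa only [Finset.sum_empty, sub_zero] using mul_sq_sub_sum_le hD hW hx ∅

theorem tendsto_nhdsGT_zero (hD : ∀ i, 0 ≤ D i) (hW : ∀ i, 0 < W i) (hpos : ∃ i, 0 < D i) :
    Tendsto (externalAngleFunction C D W) (𝓝[>] 0) atTop := by
  obtain ⟨i, hi⟩ := hpos
  have hsq : Tendsto (fun x => C * x ^ 2) (𝓝[>] 0) (𝓝 0) :=
    (Continuous.tendsto' (by fun_prop) 0 0 (by simp)).mono_left nhdsWithin_le_nhds
  have hlog : Tendsto (fun x => -(D i * Real.log (erfG (W i * x)))) (𝓝[>] 0) atTop :=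
    tendsto_neg_atBot_atTop.comp
      ((tendsto_log_erfG_const_mul_nhdsGT_zero (hW i)).const_mul_atBot hi)
  refine tendsto_atTop_mono' _ ?_ (hsq.add_atTop hlog)
  filter_upwards [self_mem_nhdsWithin] with x hx
  simpa only [Finset.sum_singleton, sub_eq_add_neg] using mul_sq_sub_sum_le hD hW hx {i}

end externalAngleFunction

theorem external_angle_exponent_function_properties_general {C : ℝ} {D W : ι → ℝ} (hC : 0 < C)
    (hW : ∀ i, 0 < W i) (hD : ∀ i, 0 ≤ D i) (hpos : ∃ i, 0 < D i) :
    StrictConvexOn ℝ (Set.Ioi 0) (externalAngleFunction C D W) ∧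
    Tendsto (externalAngleFunction C D W) (𝓝[>] 0) atTop ∧
    Tendsto (externalAngleFunction C D W) atTop atTop ∧
    ∃ x₀ ∈ Set.Ioi 0,
      (∀ x ∈ Set.Ioi 0,
        2 * C * x = ∑ i, D i * W i * erfg (W i * x) / erfG (W i * x) ↔ x = x₀) ∧
      ∀ x ∈ Set.Ioi 0, x ≠ x₀ → externalAngleFunction C D W x₀ < externalAngleFunction C D W x := by
  have hconv := externalAngleFunction.strictConvexOn hC hD hW
  have hzero := externalAngleFunction.tendsto_nhdsGT_zero (C := C) hD hW hpos
  have htop := externalAngleFunction.tendsto_atTop hC hD hW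
  refine ⟨hconv, hzero, htop, ?_⟩
  simpa only [sub_eq_zero] using exists_forall_lt_and_deriv_eq_zero_iff_of_strictConvexOn_Ioi hconv
    (fun x hx => externalAngleFunction.hasDerivAt hW hx) hzero htop

end ExternalAngle

/-- `F(x) = Cx² − D₁ log G(x) − D₂ log G(Wx)` is strictly convex on `(0,∞)`,
blows up at `0⁺` and at `∞`, and attains its unique global minimum on `(0,∞)` at the unique
point `x₀ > 0` satisfying `2Cx₀ = D₁ g(x₀)/G(x₀) + D₂ W g(Wx₀)/G(Wx₀)`. -/
theorem external_angle_exponent_function_properties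
    (C W D₁ D₂ : ℝ) (hC : 0 < C) (hW : 0 < W)
    (hD₁ : 0 ≤ D₁) (hD₂ : 0 ≤ D₂) (hD : 0 < D₁ + D₂)
    (F : ℝ → ℝ)
    (hF : ∀ x, F x = C * x ^ 2 - D₁ * Real.log (erfG x) - D₂ * Real.log (erfG (W * x))) :
    StrictConvexOn ℝ (Set.Ioi 0) F ∧
    Tendsto F (𝓝[>] 0) atTop ∧
    Tendsto F atTop atTop ∧
    ∃! x₀ : ℝ, 0 < x₀ ∧
      2 * C * x₀ = D₁ * erfg x₀ / erfG x₀ + D₂ * W * erfg (W * x₀) / erfG (W * x₀) ∧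
      ∀ x, 0 < x → x ≠ x₀ → F x₀ < F x := by
  obtain rfl : F = externalAngleFunction C ![D₁, D₂] ![1, W] := by
    ext x
    simp only [hF, externalAngleFunction, Fin.sum_univ_two, Matrix.cons_val_zero,
      Matrix.cons_val_one, one_mul, sub_sub]
  have hpos : 0 < D₁ ∨ 0 < D₂ := by
    by_contra! h
    linarith
  obtain ⟨hconv, hzero, htop, x₀, hx₀, hstat, hmin⟩ :=
    external_angle_exponent_function_properties_general (D := ![D₁, D₂]) (W := ![1, W]) hC
      (Fin.forall_fin_two.2 ⟨one_pos, hW⟩) (Fin.forall_fin_two.2 ⟨hD₁, hD₂⟩)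
      (Fin.exists_fin_two.2 hpos)
  simp only [Fin.sum_univ_two, Matrix.cons_val_zero, Matrix.cons_val_one, one_mul, mul_one] at hstat
  exact ⟨hconv, hzero, htop, x₀, ⟨hx₀, (hstat x₀ hx₀).2 rfl, hmin⟩,
    fun y ⟨hy, hy', _⟩ => (hstat y hy).1 hy'⟩
end
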